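/- For any seven vectors a, a', b, b', c, c', d in ℂ³, the following identity holds: det(a,a',c) · det(c×c', b×b', a×d) = det(b,b',c)·det(a,a',d)·det(c,c',a) + det(a,c,d)·det(a×a', b×b', c×c'). -/

import Mathlib

/-- Determinant of the 3×3 matrix with rows `u`, `v`, `w`. -/
noncomputable def det3 (u v w : Fin 3 → ℂ) : ℂ :=
  Matrix.det (Matrix.of ![u, v, w])

/-!
Write `[u v w]` for `det3 u v w`. The covector `n = b × b'` enters linearly: expanding
`n × (w × z)` turns every determinant of three cross products into a combination of dot products
`n ⬝ w` with coefficients that are brackets (`det3_cross`), and `[b b' c] = n ⬝ c`.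
Cramer's rule for the four vectors `a, c, c', d` (`cramer_dot`) then eliminates `n ⬝ d`, the terms in
`n ⬝ a` and `n ⬝ c'` cancel, and the coefficient of `n ⬝ c` is a three-term Plücker relation among
the brackets containing `a` (`pluecker`).
-/

open Matrix in
lemma det3_cross (u v n w z : Fin 3 → ℂ) :
    det3 (crossProduct u v) n (crossProduct w z) =
      (n ⬝ᵥ z) * det3 u v w - (n ⬝ᵥ w) * det3 u v z := by
  simp [det3, det_fin_three, cross_apply, dotProduct, Fin.sum_univ_three]
  ring

open Matrix in
lemma det3_eq_cross_dot (u v w : Fin 3 → ℂ) : det3 u v w = crossProduct u v ⬝ᵥ w := by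
  simp [det3, det_fin_three, cross_apply, dotProduct, Fin.sum_univ_three]
  ring

open Matrix in
/-- Cramer's rule for four vectors in a three-dimensional space, paired with a covector `n`. -/
lemma cramer_dot (n a c c' d : Fin 3 → ℂ) :
    (n ⬝ᵥ d) * det3 c c' a - (n ⬝ᵥ a) * det3 c c' d =
      (n ⬝ᵥ c) * det3 a d c' + (n ⬝ᵥ c') * det3 a c d := by
  simp [det3, det_fin_three, dotProduct, Fin.sum_univ_three]
  ring

/-- The three-term Plücker relation for `a', c, c', d` modulo the line spanned by `a`. -/
lemma pluecker (a a' c c' d : Fin 3 → ℂ) :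
    det3 a a' c * det3 a d c' =
      det3 a a' d * det3 c c' a - det3 a c d * det3 a a' c' := by
  simp [det3, Matrix.det_fin_three]
  ring

theorem three_term_exchange_relation_5 (a a' b b' c c' d : Fin 3 → ℂ) :
    det3 a a' c * det3 (crossProduct c c') (crossProduct b b') (crossProduct a d) =
      det3 b b' c * det3 a a' d * det3 c c' a
        + det3 a c d * det3 (crossProduct a a') (crossProduct b b') (crossProduct c c') := by
  rw [det3_cross, det3_cross, det3_eq_cross_dot b b' c]
  generalize crossProduct b b' = n
  linear_combination det3 a a' c * cramer_dot n a c c' d + (n ⬝ᵥ c) * pluecker a a' c c' d
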